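/- arXiv:2306.00278 — 2 statements merged into one kernel-verified Lean document; each statement's English description precedes it below -/
import Mathlib

section
/- (Rademacher–Menshov numerical inequality.) For all k, m ∈ ℕ with k < 2^m and every sequence of complex numbers (a_n)_{n∈ℕ}: sup_{k ≤ n ≤ 2^m} |a_n| ≤ |a_k| + √2 · Σ_{i=0}^{m} ( Σ_{j} |a_{(j+1)2^i} − a_{j2^i}|² )^{1/2}, where for each i the inner sum is over those j ∈ {0,…,2^{m−i}−1} for which the dyadic interval [j2^i, (j+1)2^i) is contained in [k, 2^m]. -/
noncomputable def rmS (k m : ℕ) (a : ℕ → ℂ) (i : ℕ) : ℝ :=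
  Real.sqrt (∑ j ∈ (Finset.range (2 ^ (m - i))).filter
              (fun j => k ≤ j * 2 ^ i ∧ (j + 1) * 2 ^ i ≤ 2 ^ m),
            ‖a ((j + 1) * 2 ^ i) - a (j * 2 ^ i)‖ ^ 2)

lemma rm_mem (k m i j : ℕ) (hi : i ≤ m) (h1 : k ≤ j * 2 ^ i) (h2 : (j + 1) * 2 ^ i ≤ 2 ^ m) :
    j ∈ (Finset.range (2 ^ (m - i))).filter
              (fun j => k ≤ j * 2 ^ i ∧ (j + 1) * 2 ^ i ≤ 2 ^ m) := by
  rw [Finset.mem_filter, Finset.mem_range]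
  refine ⟨?_, h1, h2⟩
  have h3 : 2 ^ m = 2 ^ (m - i) * 2 ^ i := by rw [← pow_add, Nat.sub_add_cancel hi]
  rw [h3] at h2
  exact Nat.le_of_mul_le_mul_right h2 (by positivity)

lemma rm_nonneg (k m : ℕ) (a : ℕ → ℂ) (i : ℕ) : 0 ≤ rmS k m a i := Real.sqrt_nonneg _

lemma rm_one (k m : ℕ) (a : ℕ → ℂ) (i j : ℕ) (hi : i ≤ m) (h1 : k ≤ j * 2 ^ i)
    (h2 : (j + 1) * 2 ^ i ≤ 2 ^ m) :
    ‖a ((j + 1) * 2 ^ i) - a (j * 2 ^ i)‖ ≤ √2 * rmS k m a i := by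
  have h : ‖a ((j + 1) * 2 ^ i) - a (j * 2 ^ i)‖ ≤ rmS k m a i := by
    apply Real.le_sqrt_of_sq_le
    exact Finset.single_le_sum (f := fun j => ‖a ((j + 1) * 2 ^ i) - a (j * 2 ^ i)‖ ^ 2)
      (fun _ _ => by positivity) (rm_mem k m i j hi h1 h2)
  have h5 : 1 ≤ √2 := Real.one_le_sqrt.2 (by norm_num)
  nlinarith [rm_nonneg k m a i]

lemma rm_two (k m : ℕ) (a : ℕ → ℂ) (i j l : ℕ) (hi : i ≤ m) (hjl : j ≠ l) (h1 : k ≤ j * 2 ^ i)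
    (h2 : (j + 1) * 2 ^ i ≤ 2 ^ m) (h3 : k ≤ l * 2 ^ i)
    (h4 : (l + 1) * 2 ^ i ≤ 2 ^ m) :
    ‖a ((j + 1) * 2 ^ i) - a (j * 2 ^ i)‖ + ‖a ((l + 1) * 2 ^ i) - a (l * 2 ^ i)‖
      ≤ √2 * rmS k m a i := by
  unfold rmS
  rw [← Real.sqrt_mul (by norm_num)]
  apply Real.le_sqrt_of_sq_le
  have h := Finset.sum_le_sum_of_subset_of_nonneg
    (f := fun j => ‖a ((j + 1) * 2 ^ i) - a (j * 2 ^ i)‖ ^ 2)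
    (s := {j, l}) (Finset.insert_subset (rm_mem k m i j hi h1 h2)
      (Finset.singleton_subset_iff.2 (rm_mem k m i l hi h3 h4)))
      (fun _ _ _ => by positivity)
  rw [Finset.sum_pair hjl] at h
  refine le_trans ?_ (mul_le_mul_of_nonneg_left h (by norm_num))
  nlinarith [sq_nonneg (‖a ((j + 1) * 2 ^ i) - a (j * 2 ^ i)‖ - ‖a ((l + 1) * 2 ^ i) - a (l * 2 ^ i)‖)]

lemma rm_main (k m : ℕ) (a : ℕ → ℂ) : ∀ d i : ℕ, i + d = m → ∀ p q : ℕ, p ≤ q →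
    k ≤ p * 2 ^ i → q * 2 ^ i ≤ 2 ^ m →
    ‖a (q * 2 ^ i) - a (p * 2 ^ i)‖ ≤ √2 * ∑ t ∈ Finset.range (d + 1), rmS k m a (i + t) := by
  intro d
  induction d with
  | zero =>
    intro i hi p q hpq hp hq
    obtain rfl : i = m := by omega
    have hq1 : q ≤ 1 := Nat.le_of_mul_le_mul_right (by simpa using hq) (pow_pos two_pos i)
    simp only [zero_add, Finset.sum_range_one, add_zero]
    rcases Nat.eq_or_lt_of_le hpq with h | h
    · subst h
      simpa using mul_nonneg (Real.sqrt_nonneg 2) (rm_nonneg k i a i)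
    · obtain rfl : q = p + 1 := by omega
      exact rm_one k i a i p le_rfl hp hq
  | succ d ih =>
    intro i hi p q hpq hp hq
    rcases Nat.eq_or_lt_of_le hpq with h | h
    · subst h
      simpa using mul_nonneg (Real.sqrt_nonneg 2)
        (Finset.sum_nonneg fun t _ => rm_nonneg k m a (i + t))
    have him : i ≤ m := by omega
    rw [Finset.sum_range_succ', add_zero, mul_add]
    have key : ∀ u v : ℕ, u ≤ v → p ≤ 2 * u → 2 * v ≤ q →
        ‖a ((2 * v) * 2 ^ i) - a ((2 * u) * 2 ^ i)‖ ≤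
        √2 * ∑ t ∈ Finset.range (d + 1), rmS k m a (i + (t + 1)) := by
      intro u v huv hu hv
      have e : ∀ w : ℕ, (2 * w) * 2 ^ i = w * 2 ^ (i + 1) := fun w => by ring
      have h1 := Nat.mul_le_mul_right (2 ^ i) hu
      have h2 := Nat.mul_le_mul_right (2 ^ i) hv
      rw [e] at h1 h2
      have := ih (i + 1) (by omega) u v huv (hp.trans h1) (h2.trans hq)
      rw [e, e]
      simpa only [add_assoc, add_comm 1] using this
    have tri : ∀ x y z : ℂ, ‖x - z‖ ≤ ‖x - y‖ + ‖y - z‖ := norm_sub_le_norm_sub_add_norm_sub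
    have lo : ∀ j, p ≤ j → k ≤ j * 2 ^ i := fun j hj => hp.trans (Nat.mul_le_mul_right _ hj)
    have up : ∀ j, j ≤ q → j * 2 ^ i ≤ 2 ^ m := fun j hj => (Nat.mul_le_mul_right _ hj).trans hq
    have s0 := mul_nonneg (Real.sqrt_nonneg 2) (rm_nonneg k m a i)
    rcases Nat.even_or_odd' p with ⟨u, rfl | rfl⟩ <;> rcases Nat.even_or_odd' q with ⟨v, rfl | rfl⟩
    · linarith [key u v (by omega) (by omega) (by omega)]
    · linarith [key u v (by omega) (by omega) (by omega),
        rm_one k m a i (2 * v) him (lo _ (by omega)) (up _ (by omega)),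
        tri (a ((2 * v + 1) * 2 ^ i)) (a ((2 * v) * 2 ^ i)) (a ((2 * u) * 2 ^ i))]
    · have h1 := rm_one k m a i (2 * u + 1) him (lo _ (by omega)) (up _ (by omega))
      rw [show 2 * u + 1 + 1 = 2 * (u + 1) by ring] at h1
      linarith [key (u + 1) v (by omega) (by omega) (by omega),
        tri (a ((2 * v) * 2 ^ i)) (a ((2 * (u + 1)) * 2 ^ i)) (a ((2 * u + 1) * 2 ^ i))]
    · have h1 := rm_two k m a i (2 * u + 1) (2 * v) him (by omega) (lo _ (by omega))
        (up _ (by omega)) (lo _ (by omega)) (up _ (by omega))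
      rw [show 2 * u + 1 + 1 = 2 * (u + 1) by ring] at h1
      linarith [key (u + 1) v (by omega) (by omega) (by omega),
        tri (a ((2 * v + 1) * 2 ^ i)) (a ((2 * v) * 2 ^ i)) (a ((2 * u + 1) * 2 ^ i)),
        tri (a ((2 * v) * 2 ^ i)) (a ((2 * (u + 1)) * 2 ^ i)) (a ((2 * u + 1) * 2 ^ i))]


/-- Proposition 2.1, Rademacher–Menshov numerical inequality:
for `k < 2^m` and any sequence of complex numbers `(a_n)`,
`sup_{k ≤ n ≤ 2^m} |a_n| ≤ |a_k| + √2 ∑_{i=0}^{m} (∑_j |a_{(j+1)2^i} - a_{j2^i}|²)^{1/2}`,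
where for each `i` the inner sum runs over those `j ∈ {0, …, 2^{m-i}-1}` for which the
dyadic interval `[j2^i, (j+1)2^i)` is contained in `[k, 2^m]`. -/
theorem rademacher_menshov_inequality
    (k m : ℕ) (hk : k < 2 ^ m) (a : ℕ → ℂ) :
    ∀ n : ℕ, k ≤ n → n ≤ 2 ^ m →
      ‖a n‖ ≤ ‖a k‖ + Real.sqrt 2 *
        ∑ i ∈ Finset.range (m + 1),
          Real.sqrt (∑ j ∈ (Finset.range (2 ^ (m - i))).filter
              (fun j => k ≤ j * 2 ^ i ∧ (j + 1) * 2 ^ i ≤ 2 ^ m),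
            ‖a ((j + 1) * 2 ^ i) - a (j * 2 ^ i)‖ ^ 2) := by
  intro n hkn hn
  have h := rm_main k m a m 0 (by omega) k n hkn (by simp) (by simpa using hn)
  simp only [pow_zero, mul_one, zero_add] at h
  have h2 := norm_sub_norm_le (a n) (a k)
  have h3 : ‖a n‖ ≤ ‖a k‖ + √2 * ∑ t ∈ Finset.range (m + 1), rmS k m a t := by linarith
  exact h3
end

section
/- (Gaussian sum estimate.) Let k ∈ ℕ, let Γ ⊆ ℕ_0^k∖{0} be a nonempty finite set, and let k', k'' ∈ {0,…,k} with k' + k'' = k. There exists δ > 0 such that for all q ∈ ℕ and a ∈ ℕ_q^Γ with gcd(a,q) = 1, the Gaussian sum G(a/q) := q^{−k'} φ(q)^{−k''} Σ_{x∈ℕ_q^{k'}} Σ_{y∈A_q^{k''}} e((a/q)·𝒬(x,y)) satisfies |G(a/q)| ≲ q^{−δ}. -/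
open scoped ENNReal NNReal

noncomputable section

/-- `e(x) = e^{2πix}`. -/
def eC (x : ℝ) : ℂ := Complex.exp (2 * Real.pi * Complex.I * x)

/-- The Gaussian sum `G(a/q)` associated with the canonical polynomial mapping
`𝒬(x) = (x^γ : γ ∈ Γ)`:
`G(a/q) = q^{-k'} φ(q)^{-k''} ∑_{x ∈ ℕ_q^{k'}} ∑_{y ∈ A_q^{k''}} e((a/q)·𝒬(x,y))`,
where the first `k'` coordinates range over `ℕ_q = {1,…,q}` and the last `k''`
coordinates range over `A_q = {m ∈ ℕ_q : gcd(m,q) = 1}`. -/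
def gaussSumQ {k : ℕ} (Γ : Finset (Fin k → ℕ)) (k' k'' : ℕ) (q : ℕ)
    (a : (Fin k → ℕ) → ℕ) : ℂ :=
  ((q : ℂ) ^ k' * (Nat.totient q : ℂ) ^ k'')⁻¹ *
    ∑ v ∈ Fintype.piFinset (fun i : Fin k =>
        if (i : ℕ) < k' then Finset.Icc 1 q
        else (Finset.Icc 1 q).filter fun m => Nat.Coprime m q),
      eC (∑ γ ∈ Γ, ((a γ : ℝ) / (q : ℝ)) * ∏ i, (v i : ℝ) ^ (γ i))

end

theorem tau_bound (ε : ℝ) (hε : 0 < ε) : ∃ K : ℝ, 1 ≤ K ∧ ∀ n : ℕ, 0 < n →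
    (n.divisors.card : ℝ) ≤ K * (n : ℝ) ^ ε := by
  have hl2 : 0 < Real.log 2 := Real.log_pos (by norm_num)
  set K : ℝ := 1 + 1 / (ε * Real.log 2) with hK
  have hK1 : 1 ≤ K := by
    have : 0 < 1 / (ε * Real.log 2) := by positivity
    linarith
  obtain ⟨P, hP⟩ := exists_nat_ge ((2 : ℝ) ^ (1 / ε))
  refine ⟨K ^ P, one_le_pow₀ hK1, fun n hn => ?_⟩
  have hfac : (n : ℝ) ^ ε = ∏ p ∈ n.primeFactors, ((p : ℝ) ^ ε) ^ (n.factorization p) := by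
    conv_lhs => rw [← Nat.prod_factorization_pow_eq_self hn.ne']
    rw [Finsupp.prod, Nat.support_factorization]
    push_cast
    rw [← Real.finsetProd_rpow _ _ (fun i _ => by positivity)]
    refine Finset.prod_congr rfl fun p _ => ?_
    rw [← Real.rpow_natCast, ← Real.rpow_natCast, ← Real.rpow_mul (by positivity),
      ← Real.rpow_mul (by positivity), mul_comm]
  have hterm : ∀ p ∈ n.primeFactors, ((n.factorization p + 1 : ℕ) : ℝ) ≤
      (if p < P then K else 1) * ((p : ℝ) ^ ε) ^ (n.factorization p) := by
    intro p hp
    have hp2 : 2 ≤ p := (Nat.prime_of_mem_primeFactors hp).two_le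
    set e := n.factorization p
    have hp2' : (2 : ℝ) ≤ p := by exact_mod_cast hp2
    split_ifs with h
    · have h1 : ((2 : ℝ) ^ ε) ^ e ≤ ((p : ℝ) ^ ε) ^ e := by gcongr
      have h2 : 1 + e * (ε * Real.log 2) ≤ ((2 : ℝ) ^ ε) ^ e := by
        rw [← Real.rpow_natCast, ← Real.rpow_mul (by positivity), Real.rpow_def_of_pos (by norm_num)]
        have := Real.add_one_le_exp (Real.log 2 * (ε * e))
        linarith
      have h3 : ((e + 1 : ℕ) : ℝ) ≤ K * (1 + e * (ε * Real.log 2)) := by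
        have : K * (1 + e * (ε * Real.log 2)) = 1 + e + (e * (ε * Real.log 2)) + 1 / (ε * Real.log 2) := by
          rw [hK]; field_simp; ring
        rw [this]
        push_cast
        have : 0 < 1 / (ε * Real.log 2) := by positivity
        have : 0 ≤ e * (ε * Real.log 2) := by positivity
        linarith
      exact h3.trans (mul_le_mul_of_nonneg_left (h2.trans h1) (by linarith))
    · rw [one_mul]
      have h1 : (2 : ℝ) ≤ (p : ℝ) ^ ε := by
        have : (2 : ℝ) ^ (1 / ε) ≤ p := hP.trans (by exact_mod_cast not_lt.mp h)
        calc (2 : ℝ) = ((2 : ℝ) ^ (1 / ε)) ^ ε := by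
              rw [← Real.rpow_mul (by norm_num)]; field_simp; simp
          _ ≤ _ := by gcongr
      calc ((e + 1 : ℕ) : ℝ) ≤ (2 : ℝ) ^ e := by exact_mod_cast Nat.lt_two_pow_self
        _ ≤ _ := by gcongr
  rw [Nat.card_divisors hn.ne', hfac]
  push_cast
  calc _ ≤ ∏ p ∈ n.primeFactors, (if p < P then K else 1) * ((p : ℝ) ^ ε) ^ (n.factorization p) :=
        Finset.prod_le_prod (fun i _ => by positivity) (fun p hp => by exact_mod_cast hterm p hp)
    _ = (∏ p ∈ n.primeFactors, (if p < P then K else 1)) * ∏ p ∈ n.primeFactors, ((p : ℝ) ^ ε) ^ (n.factorization p) :=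
        Finset.prod_mul_distrib
    _ ≤ _ := by
        gcongr
        rw [Finset.prod_ite, Finset.prod_const, Finset.prod_const_one, mul_one]
        refine pow_le_pow_right₀ hK1 ?_
        calc _ ≤ (Finset.range P).card := Finset.card_le_card (fun x hx => by
                simp at hx ⊢; exact hx.2)
          _ = P := by simp

/-- functional polynomials of degree at most `d` -/
def FPoly {G A : Type} [AddCommGroup G] [AddCommGroup A] : ℕ → (G → A) → Prop
  | 0, f => ∀ x y, f x = f y
  | d + 1, f => ∀ h, FPoly d (fwdDiff h f)

set_option linter.unusedSectionVars false

section poly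
variable {G A : Type} [AddCommGroup G] [AddCommGroup A]

theorem FPoly.iter {d : ℕ} : ∀ {f : G → A}, FPoly d f → ∀ h, (fwdDiff h)^[d+1] f = 0 := by
  induction d with
  | zero => intro f hf h; ext x; simp [fwdDiff, hf (x+h) x]
  | succ d ih => intro f hf h; rw [Function.iterate_succ_apply]; exact ih (hf h) h

theorem iter_zero' (h : G) (n : ℕ) : (fwdDiff h)^[n] (0 : G → A) = 0 := by
  induction n with
  | zero => rfl
  | succ n ih =>
    rw [Function.iterate_succ_apply]
    have : fwdDiff h (0 : G → A) = 0 := by ext; simp [fwdDiff]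
    rw [this, ih]

theorem iter_ge {h : G} {f : G → A} {n m : ℕ} (hf : (fwdDiff h)^[n] f = 0) (hm : n ≤ m) :
    (fwdDiff h)^[m] f = 0 := by
  obtain ⟨c, rfl⟩ := Nat.exists_eq_add_of_le' hm
  rw [Function.iterate_add_apply, hf, iter_zero']

theorem smul_iter_ge {h : G} {f : G → A} {c n m : ℕ} (hf : c • (fwdDiff h)^[n] f = 0) (hm : n ≤ m) :
    c • (fwdDiff h)^[m] f = 0 := by
  rw [← fwdDiff_iter_const_smul] at hf ⊢
  exact iter_ge hf hm

theorem FPoly.smul {d : ℕ} (c : ℕ) : ∀ {f : G → A}, FPoly d f → FPoly d (c • f) := by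
  induction d with
  | zero => intro f hf x y; simp [hf x y]
  | succ d ih => intro f hf h; rw [fwdDiff_const_smul]; exact ih (hf h)

theorem fwdDiff_comm' (h k : G) (f : G → A) : fwdDiff h (fwdDiff k f) = fwdDiff k (fwdDiff h f) := by
  ext x; simp only [fwdDiff]; rw [add_right_comm]; abel

theorem fwdDiff_iter_comm' (h k : G) (f : G → A) (n : ℕ) :
    fwdDiff h ((fwdDiff k)^[n] f) = (fwdDiff k)^[n] (fwdDiff h f) := by
  induction n generalizing f with
  | zero => rfl
  | succ n ih => rw [Function.iterate_succ_apply, ih, fwdDiff_comm', Function.iterate_succ_apply]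

theorem dvd_fac_choose (I i : ℕ) (hi : 1 ≤ i) : I ∣ i.factorial * I.choose i := by
  rw [← Nat.descFactorial_eq_factorial_mul_choose]
  obtain ⟨j, rfl⟩ := Nat.exists_eq_add_of_le' hi
  cases I with
  | zero => simp
  | succ I => rw [Nat.succ_descFactorial_succ]; exact dvd_mul_right _ _

theorem smul_dvd_zero {f : G → A} {a b : ℕ} (h : a ∣ b) (hf : a • f = 0) : b • f = 0 := by
  obtain ⟨c, rfl⟩ := h
  rw [mul_comm, mul_smul, hf, smul_zero]

theorem keyA (d I : ℕ) (hI : 0 < I) (g : G → A) (h : G) (hg : (fwdDiff h)^[d+1] g = 0)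
    (h0 : fwdDiff (I • h) g = 0) :
    (d.factorial ^ d * I) • fwdDiff h g = 0 := by
  have claim : ∀ j ≤ d, (d.factorial ^ j * I) • (fwdDiff h)^[d+1-j] g = 0 := by
    intro j
    induction j with
    | zero => intro _; simp [hg]
    | succ j ih =>
      intro hj
      have ih := ih (by omega)
      obtain ⟨s, rfl⟩ : ∃ s, d = s + j + 1 := ⟨d - j - 1, by omega⟩
      have e1 : s + j + 1 + 1 - (j + 1) = 1 + s := by omega
      have e2 : s + j + 1 + 1 - j = 2 + s := by omega
      rw [e1]; rw [e2] at ih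
      set D := s + j + 1 with hD
      have hu : fwdDiff (I • h) ((fwdDiff h)^[s] g) = 0 := by
        rw [fwdDiff_iter_comm', h0, iter_zero']
      rw [Function.iterate_add_apply] at ih ⊢
      have hbig : (fwdDiff h)^[D+1] ((fwdDiff h)^[s] g) = 0 := by
        rw [← Function.iterate_add_apply]; exact iter_ge hg (by omega)
      set u := (fwdDiff h)^[s] g with hudef
      ext x
      have h1 := shift_eq_sum_fwdDiff_iter h u I x
      have h2 : u (x + I • h) = u x := by
        have := congrFun hu x
        simpa [fwdDiff, sub_eq_zero] using this
      obtain ⟨J, rfl⟩ := Nat.exists_eq_add_of_le' hI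
      rw [h2, Finset.sum_range_succ', Finset.sum_range_succ'] at h1
      simp only [Nat.choose_zero_right, one_smul, Function.iterate_zero, id] at h1
      have h3 := congrArg (fun z => (D.factorial ^ (j+1)) • z) h1
      simp only [smul_add, Finset.smul_sum] at h3
      have h4 : ∑ i ∈ Finset.range J, D.factorial ^ (j+1) • (J+1).choose (i+1+1) • ((fwdDiff h)^[i+1+1] u) x = 0 := by
        refine Finset.sum_eq_zero fun i _ => ?_
        rw [← mul_smul]
        by_cases hi : i + 2 ≤ D
        · have : (D.factorial ^ (j+1) * (J+1).choose (i+1+1)) • (fwdDiff h)^[i+1+1] u = 0 := by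
            refine smul_dvd_zero (a := D.factorial ^ j * (J+1)) ?_ (smul_iter_ge ih (by omega))
            rw [pow_succ, mul_assoc]
            refine mul_dvd_mul_left _ ((dvd_fac_choose _ (i+1+1) (by omega)).trans ?_)
            exact mul_dvd_mul_right (Nat.factorial_dvd_factorial hi) _
          exact congrFun this x
        · rw [iter_ge hbig (by omega)]; simp
      rw [h4] at h3
      simp only [zero_add, Nat.choose_one_right] at h3
      have h5 := (add_eq_right.mp h3.symm)
      rw [mul_smul]; exact h5
  have := claim d le_rfl
  simpa using this

theorem keyC (D R : ℕ) (hR : 0 < R) (f : G → A) (hf : FPoly D f)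
    (hh : ∀ h k, R • fwdDiff h (fwdDiff k f) = 0) (x y : G) :
    f (x + (D.factorial * R) • y) = f x + (D.factorial * R) • fwdDiff y f 0 := by
  set r := D.factorial * R with hr
  have hr0 : 0 < r := by positivity
  have hconst : r • fwdDiff y f x = r • fwdDiff y f 0 := by
    have := congrFun (smul_dvd_zero (b := r) (by simp [hr]) (hh x y)) 0
    simp only [Pi.smul_apply, Pi.zero_apply] at this
    rw [fwdDiff, smul_sub, sub_eq_zero, zero_add] at this
    exact this
  rw [shift_eq_sum_fwdDiff_iter y f r x, ← hconst]
  obtain ⟨J, hJ⟩ := Nat.exists_eq_add_of_le' hr0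
  rw [hJ, Finset.sum_range_succ', Finset.sum_range_succ', Finset.sum_eq_zero]
  · simp [add_comm]
  · intro i _
    rw [← hJ]
    by_cases hi : i + 2 ≤ D
    · have : (r.choose (i+1+1)) • (fwdDiff y)^[i+1+1] f = 0 := by
        refine smul_dvd_zero (a := R) ?_ (smul_iter_ge (n := 2) (hh y y) (by omega))
        have h1 := dvd_fac_choose r (i+1+1) (by omega)
        obtain ⟨l, hl⟩ := Nat.factorial_dvd_factorial hi
        rw [hr, hl, mul_assoc] at h1
        have := Nat.dvd_of_mul_dvd_mul_left (Nat.factorial_pos _) h1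
        exact (dvd_mul_left R l).trans (by rw [hr, hl, mul_assoc]; exact this)
      exact congrFun this x
    · rw [iter_ge (hf.iter y) (by omega)]; simp

end poly

section main
variable {G : Type} [AddCommGroup G]

theorem ord_dvd_iff {A : Type} [AddCommGroup A] (f : G → A) (t : ℕ) :
    addOrderOf (fun x => f x - f 0) ∣ t ↔ ∀ x y, t • f x = t • f y := by
  rw [addOrderOf_dvd_iff_nsmul_eq_zero]
  constructor
  · intro h x y
    have h1 := congrFun h x
    have h2 := congrFun h y
    simp only [Pi.smul_apply, Pi.zero_apply, smul_sub, sub_eq_zero] at h1 h2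
    rw [h1, h2]
  · intro h
    ext x
    simp only [Pi.smul_apply, Pi.zero_apply, smul_sub, sub_eq_zero]
    exact h x 0

/-- the subgroup of shifts with constant difference -/
def Hsub {A : Type} [AddCommGroup A] (f : G → A) (t : ℕ) : AddSubgroup G where
  carrier := {h | ∀ x y, t • fwdDiff h f x = t • fwdDiff h f y}
  zero_mem' := by intro x y; simp [fwdDiff]
  add_mem' := by
    intro a b ha hb x y
    have e : ∀ z, fwdDiff (a+b) f z = fwdDiff a f (z+b) + fwdDiff b f z := by
      intro z; simp only [fwdDiff]; rw [← add_assoc, add_right_comm]; abel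
    rw [e, e, smul_add, smul_add, ha (x+b) (y+b), hb x y]
  neg_mem' := by
    intro a ha x y
    have e : ∀ z, fwdDiff (-a) f z = - fwdDiff a f (z-a) := by
      intro z; simp [fwdDiff, sub_eq_add_neg]
    rw [e, e, smul_neg, smul_neg, ha (x-a) (y-a)]

variable [Fintype G]

theorem ord_le (d q : ℕ) [NeZero q] (f : G → ZMod q) (hf : FPoly (d+1) f)
    (hS : ∑ x, ZMod.stdAddChar (f x) ≠ 0) (t : ℕ) (ht : 0 < t) :
    addOrderOf (fun x => f x - f 0) ≤
      (d+1).factorial * (d.factorial ^ d * (Hsub f t).index * t) := by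
  set I := (Hsub f t).index with hI
  have hI0 : 0 < I := Nat.pos_of_ne_zero AddSubgroup.index_ne_zero_of_finite
  set R := d.factorial ^ d * I * t with hRdef
  have hR : 0 < R := by positivity
  have hh : ∀ h k, R • fwdDiff h (fwdDiff k f) = 0 := by
    intro h k
    have hmem : I • h ∈ Hsub f t := AddSubgroup.nsmul_index_mem _ h
    have h0 : fwdDiff (I • h) (t • fwdDiff k f) = 0 := by
      rw [fwdDiff_const_smul, fwdDiff_comm', ← fwdDiff_const_smul]
      ext x
      simp only [Pi.zero_apply]
      rw [fwdDiff, sub_eq_zero]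
      exact hmem _ _
    have := keyA d I hI0 (t • fwdDiff k f) h (((hf k).smul t).iter h) h0
    rw [fwdDiff_const_smul, ← mul_smul] at this
    exact this
  have hC := keyC (d+1) R hR f hf hh
  set r := (d+1).factorial * R with hr
  have hr0 : 0 < r := by positivity
  refine Nat.le_of_dvd hr0 ((ord_dvd_iff f r).2 ?_)
  have key : ∀ y, r • fwdDiff y f 0 = 0 := by
    intro y
    have h1 : ∑ x, ZMod.stdAddChar (f x) = (∑ x, ZMod.stdAddChar (f x)) * ZMod.stdAddChar (r • fwdDiff y f 0) := by
      conv_lhs => rw [← Equiv.sum_comp (Equiv.addRight (r • y))]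
      rw [Finset.sum_mul]
      refine Finset.sum_congr rfl fun x _ => ?_
      rw [Equiv.coe_addRight, hC, AddChar.map_add_eq_mul]
    have h2 : (ZMod.stdAddChar (r • fwdDiff y f 0) : ℂ) = 1 := by
      have := mul_left_cancel₀ hS ((mul_one _).trans h1)
      exact this.symm
    apply ZMod.injective_stdAddChar
    rw [h2, AddChar.map_zero_eq_one]
  have key' : ∀ y, r • f y = r • f 0 := by
    intro y
    have := key y
    rwa [fwdDiff, zero_add, smul_sub, sub_eq_zero] at this
  intro x y
  rw [key' x, key' y]

theorem sq_sum (q : ℕ) [NeZero q] (f : G → ZMod q) :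
    ‖∑ x, (ZMod.stdAddChar (f x) : ℂ)‖ ^ 2 ≤
      ∑ h, ‖∑ x, (ZMod.stdAddChar (fwdDiff h f x) : ℂ)‖ := by
  have : (‖∑ x, (ZMod.stdAddChar (f x) : ℂ)‖ ^ 2 : ℂ) =
      ∑ h, ∑ x, (ZMod.stdAddChar (fwdDiff h f x) : ℂ) := by
    rw [← Complex.mul_conj', map_sum, Finset.sum_mul_sum, Finset.sum_comm]
    conv_rhs => rw [Finset.sum_comm]
    refine Finset.sum_congr rfl fun x _ => ?_
    rw [← Equiv.sum_comp (Equiv.addLeft x)]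
    refine Finset.sum_congr rfl fun h _ => ?_
    rw [Equiv.coe_addLeft, fwdDiff, sub_eq_add_neg, AddChar.map_add_eq_mul, AddChar.map_neg_eq_conj]
  have h2 := congrArg norm this
  rw [norm_pow, Complex.norm_real, norm_norm] at h2
  rw [h2]
  exact norm_sum_le _ _

end main

theorem main_poly (d : ℕ) : ∃ δ : ℝ, 0 < δ ∧ δ ≤ 1 ∧ ∃ C : ℝ, 1 ≤ C ∧
    ∀ (G : Type) [AddCommGroup G] [Fintype G] (q : ℕ) [NeZero q] (f : G → ZMod q), FPoly d f →
      ‖∑ x, (ZMod.stdAddChar (f x) : ℂ)‖ ≤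
        C * Fintype.card G * (addOrderOf (fun x => f x - f 0) : ℝ) ^ (-δ) := by
  induction d with
  | zero =>
    refine ⟨1, one_pos, le_rfl, 1, le_rfl, ?_⟩
    intro G _ _ q _ f hf
    have : addOrderOf (fun x => f x - f 0) = 1 := by
      rw [AddMonoid.addOrderOf_eq_one_iff]; ext x; simp [hf x 0]
    rw [this]
    refine (norm_sum_le _ _).trans ?_
    simp
  | succ d ih =>
    obtain ⟨δ, hδ, hδ1, C, hC, ih⟩ := ih
    obtain ⟨K, hK, hτ⟩ := tau_bound (δ/2) (by positivity)
    set N : ℕ := (d+1).factorial * d.factorial ^ d with hN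
    have hN0 : 0 < N := by positivity
    have hN1 : (1:ℝ) ≤ N := by exact_mod_cast hN0
    have hCNK : 1 ≤ C * N * K := by
      exact one_le_mul_of_one_le_of_one_le (one_le_mul_of_one_le_of_one_le hC hN1) hK
    refine ⟨δ/4, by positivity, by linarith, C * N * K, hCNK, ?_⟩
    intro G _ _ q _ f hf
    by_cases hS : ∑ x, (ZMod.stdAddChar (f x) : ℂ) = 0
    · rw [hS, norm_zero]; positivity
    set Q := addOrderOf (fun x => f x - f 0) with hQ
    have hQ0 : 0 < Q := by
      apply Nat.pos_of_dvd_of_pos _ (Nat.pos_of_ne_zero (NeZero.ne q))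
      rw [hQ, ord_dvd_iff]; intro x y; simp
    have hQR : (0:ℝ) < Q := by exact_mod_cast hQ0
    set g : ℝ := ((Fintype.card G : ℕ) : ℝ) with hg
    have hg0 : 0 < g := by rw [hg]; exact_mod_cast Fintype.card_pos
    let T : G → ℕ := fun h => addOrderOf (fun x => fwdDiff h f x - fwdDiff h f 0)
    have hT : ∀ h, T h ∈ Q.divisors := by
      intro h
      rw [Nat.mem_divisors]
      refine ⟨?_, hQ0.ne'⟩
      have := (ord_dvd_iff f Q).1 dvd_rfl
      apply (ord_dvd_iff _ _).2
      intro x y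
      simp only [fwdDiff, smul_sub]
      rw [this (x+h) (y+h), this x y]
    have hcount : ∀ t ∈ Q.divisors, ((Finset.univ.filter fun h => T h = t).card : ℝ) * (t:ℝ)^(-δ) ≤
        g * N * (Q:ℝ)^(-δ) := by
      intro t ht
      have ht0 : 0 < t := Nat.pos_of_mem_divisors ht
      have htR : (0:ℝ) < t := by exact_mod_cast ht0
      have hle := ord_le d q f hf hS t ht0
      set I := (Hsub f t).index with hI
      have hI0 : 0 < I := Nat.pos_of_ne_zero AddSubgroup.index_ne_zero_of_finite
      have hIR : (1:ℝ) ≤ I := by exact_mod_cast hI0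
      have h1 : ((Finset.univ.filter fun h => T h = t).card : ℝ) ≤ Nat.card (Hsub f t) := by
        have : (Finset.univ.filter fun h => T h = t).card ≤ Nat.card (Hsub f t) := by
          rw [← Set.ncard_coe_finset]
          change _ ≤ Nat.card ((Hsub f t : Set G))
          rw [Nat.card_coe_set_eq]
          refine Set.ncard_le_ncard ?_ (Set.toFinite _)
          intro h hh
          have hh' : T h = t := by simpa using hh
          exact (ord_dvd_iff _ _).1 (dvd_of_eq hh')
        exact_mod_cast this
      have h2 : (Nat.card (Hsub f t) : ℝ) * I = g := by
        rw [hg, ← Nat.card_eq_fintype_card]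
        exact_mod_cast AddSubgroup.card_mul_index _
      have h3 : (Q:ℝ) ≤ N * I * t := by
        have : Q ≤ N * I * t := by rw [hN]; refine hle.trans (le_of_eq (by ring))
        exact_mod_cast this
      have h4 : (Q:ℝ)^δ ≤ N * I * (t:ℝ)^δ := by
        calc (Q:ℝ)^δ ≤ (N * I * t : ℝ)^δ := by gcongr
          _ = (N * I : ℝ)^δ * (t:ℝ)^δ := by rw [Real.mul_rpow (by positivity) (by positivity)]
          _ ≤ (N * I : ℝ)^(1:ℝ) * (t:ℝ)^δ := by
              gcongr
              exact one_le_mul_of_one_le_of_one_le hN1 hIR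
          _ = _ := by rw [Real.rpow_one]
      rw [Real.rpow_neg htR.le, Real.rpow_neg hQR.le, ← div_eq_mul_inv, ← div_eq_mul_inv,
        div_le_div_iff₀ (by positivity) (by positivity)]
      calc _ ≤ (Nat.card (Hsub f t) : ℝ) * (N * I * (t:ℝ)^δ) := by gcongr
        _ = _ := by rw [← h2]; ring
    have hsq : ‖∑ x, (ZMod.stdAddChar (f x) : ℂ)‖ ^ 2 ≤ (C * N * K) * g^2 * (Q:ℝ)^(-(δ/2)) := by
      calc _ ≤ ∑ h, ‖∑ x, (ZMod.stdAddChar (fwdDiff h f x) : ℂ)‖ := sq_sum q f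
        _ ≤ ∑ h, C * g * (T h : ℝ)^(-δ) := Finset.sum_le_sum fun h _ => ih G q _ (hf h)
        _ = C * g * ∑ h, (T h : ℝ)^(-δ) := by rw [Finset.mul_sum]
        _ = C * g * ∑ t ∈ Q.divisors, ((Finset.univ.filter fun h => T h = t).card : ℝ) * (t:ℝ)^(-δ) := by
            rw [← Finset.sum_fiberwise_of_maps_to (s := Finset.univ) (t := Q.divisors) (g := T) (fun h _ => hT h)]
            congr 1
            refine Finset.sum_congr rfl fun t _ => ?_
            rw [Finset.sum_congr rfl (g := fun _ => (t:ℝ)^(-δ))]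
            · rw [Finset.sum_const, nsmul_eq_mul]
            · intro h hh; rw [(Finset.mem_filter.1 hh).2]
        _ ≤ C * g * ∑ t ∈ Q.divisors, g * N * (Q:ℝ)^(-δ) := by
            exact mul_le_mul_of_nonneg_left (Finset.sum_le_sum hcount) (by positivity)
        _ = C * g * ((Q.divisors.card : ℝ) * (g * N * (Q:ℝ)^(-δ))) := by
            rw [Finset.sum_const, nsmul_eq_mul]
        _ ≤ C * g * ((K * (Q:ℝ)^(δ/2)) * (g * N * (Q:ℝ)^(-δ))) := by
            gcongr
            exact hτ Q hQ0
        _ = (C * N * K) * g^2 * ((Q:ℝ)^(δ/2) * (Q:ℝ)^(-δ)) := by ring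
        _ = _ := by rw [← Real.rpow_add hQR]; congr 2; ring
    refine (pow_le_pow_iff_left₀ (norm_nonneg _) (by positivity) two_ne_zero).1 ?_
    refine hsq.trans ?_
    rw [mul_pow, mul_pow, ← Real.rpow_natCast ((Q:ℝ)^_), ← Real.rpow_mul hQR.le]
    have : -(δ/4) * ((2:ℕ):ℝ) = -(δ/2) := by push_cast; ring
    rw [this]
    gcongr
    nlinarith

section polyring
variable {G R : Type} [AddCommGroup G] [CommRing R]

theorem FPoly.succ {d : ℕ} : ∀ {f : G → R}, FPoly d f → FPoly (d+1) f := by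
  induction d with
  | zero => intro f hf h x y; simp [fwdDiff, hf (x+h) x, hf (y+h) y]
  | succ d ih => intro f hf h; exact ih (hf h)

theorem FPoly.mono {d e : ℕ} (hde : d ≤ e) {f : G → R} (hf : FPoly d f) : FPoly e f := by
  induction hde with
  | refl => exact hf
  | step _ ih => exact ih.succ

theorem FPoly.add {d : ℕ} : ∀ {f g : G → R}, FPoly d f → FPoly d g → FPoly d (f + g) := by
  induction d with
  | zero => intro f g hf hg x y; simp [hf x y, hg x y]
  | succ d ih => intro f g hf hg h; rw [fwdDiff_add]; exact ih (hf h) (hg h)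

theorem FPoly.const (c : R) (d : ℕ) : FPoly d (fun _ : G => c) :=
  FPoly.mono (Nat.zero_le d) (fun _ _ => rfl)

theorem FPoly.constMul (c : R) {d : ℕ} : ∀ {f : G → R}, FPoly d f → FPoly d (fun x => c * f x) := by
  induction d with
  | zero => intro f hf x y; simp [hf x y]
  | succ d ih =>
    intro f hf h
    have : fwdDiff h (fun x => c * f x) = fun x => c * fwdDiff h f x := by
      ext x; simp [fwdDiff, mul_sub]
    rw [this]; exact ih (hf h)

theorem FPoly.shift (k : G) {d : ℕ} : ∀ {f : G → R}, FPoly d f → FPoly d (fun x => f (x + k)) := by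
  induction d with
  | zero => intro f hf x y; exact hf _ _
  | succ d ih =>
    intro f hf h
    have : fwdDiff h (fun x => f (x + k)) = fun x => fwdDiff h f (x + k) := by
      ext x; simp [fwdDiff, add_right_comm]
    rw [this]; exact ih (hf h)

theorem FPoly.mul {d : ℕ} : ∀ {e : ℕ} {f g : G → R}, FPoly d f → FPoly e g →
    FPoly (d + e) (fun x => f x * g x) := by
  induction d with
  | zero =>
    intro e f g hf hg
    have : (fun x => f x * g x) = fun x => f 0 * g x := by ext x; rw [hf x 0]
    rw [this, zero_add]; exact hg.constMul _
  | succ d ih =>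
    intro e
    induction e with
    | zero =>
      intro f g hf hg
      have : (fun x => f x * g x) = fun x => g 0 * f x := by ext x; rw [hg x 0, mul_comm]
      rw [this]; exact hf.constMul _
    | succ e ih2 =>
      intro f g hf hg h
      have : fwdDiff h (fun x => f x * g x) =
          (fun x => fwdDiff h f x * g (x + h)) + (fun x => f x * fwdDiff h g x) := by
        ext x; simp only [fwdDiff, Pi.add_apply]; ring
      rw [this]
      refine FPoly.add ?_ (ih2 hf (hg h))
      have := ih (hf h) (hg.shift h)
      rwa [show d + (e+1) = d + 1 + e by ring] at this

theorem FPoly.pow {f : G → R} (hf : FPoly 1 f) (n : ℕ) : FPoly n (fun x => f x ^ n) := by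
  induction n with
  | zero => simpa using FPoly.const (1 : R) 0
  | succ n ih => simp only [pow_succ]; exact ih.mul hf

theorem FPoly.prod {ι : Type} (s : Finset ι) (e : ι → ℕ) (f : ι → G → R)
    (hf : ∀ i, FPoly (e i) (f i)) : FPoly (∑ i ∈ s, e i) (fun x => ∏ i ∈ s, f i x) := by
  classical
  induction s using Finset.induction_on with
  | empty => simpa using FPoly.const (1 : R) 0
  | insert a s ha ih =>
    simp only [Finset.sum_insert ha, Finset.prod_insert ha]
    exact (hf a).mul ih

theorem FPoly.sum {ι : Type} (s : Finset ι) (d : ℕ) (f : ι → G → R)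
    (hf : ∀ i ∈ s, FPoly d (f i)) : FPoly d (fun x => ∑ i ∈ s, f i x) := by
  classical
  induction s using Finset.induction_on with
  | empty => simpa using FPoly.const (0 : R) d
  | insert a s ha ih =>
    simp only [Finset.sum_insert ha]
    exact (hf a (Finset.mem_insert_self _ _)).add
      (ih fun i hi => hf i (Finset.mem_insert_of_mem hi))

end polyring

theorem vdm (D : ℕ) : ∃ N : ℕ, 0 < N ∧ ∀ (k q : ℕ) (Γ : Finset (Fin k → ℕ)),
    (∀ γ ∈ Γ, ∀ i, γ i ≤ D) → ∀ (c : (Fin k → ℕ) → ZMod q),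
    (∀ x y : Fin k → ZMod q, ∑ γ ∈ Γ, c γ * ∏ i, x i ^ γ i = ∑ γ ∈ Γ, c γ * ∏ i, y i ^ γ i) →
    ∀ γ ∈ Γ, γ ≠ 0 → (N : ZMod q) ^ k * c γ = 0 := by
  classical
  let V : Matrix (Fin (D+1)) (Fin (D+1)) ℤ := Matrix.vandermonde (fun i => ((i : ℕ) : ℤ))
  have hV : V.det ≠ 0 := by
    rw [Matrix.det_vandermonde_ne_zero_iff]
    intro a b hab
    exact Fin.ext (by simpa using hab)
  refine ⟨V.det.natAbs, Int.natAbs_pos.2 hV, ?_⟩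
  intro k q Γ hΓ c hc γ hγ hγ0
  let w : (Fin k → Fin (D+1)) → ZMod q := fun v => ∏ i, ((V.adjugate (Fin.ofNat (D+1) (γ i)) (v i) : ℤ) : ZMod q)
  have orth : ∀ β : Fin k → ℕ, (∀ i, β i ≤ D) →
      ∑ v, w v * ∏ i, (((v i : ℕ) : ZMod q)) ^ β i = if β = γ then ((V.det : ℤ) : ZMod q) ^ k else 0 := by
    intro β hβ
    have h1 : ∀ i, ∑ j : Fin (D+1), ((V.adjugate (Fin.ofNat (D+1) (γ i)) j : ℤ) : ZMod q) * ((j : ℕ) : ZMod q) ^ β i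
        = if β i = γ i then ((V.det : ℤ) : ZMod q) else 0 := by
      intro i
      have h2 := congrFun (congrFun (Matrix.adjugate_mul V) (Fin.ofNat (D+1) (γ i))) (Fin.ofNat (D+1) (β i))
      rw [Matrix.mul_apply] at h2
      have h3 := congrArg (fun z : ℤ => (z : ZMod q)) h2
      simp only [Int.cast_sum, Int.cast_mul, V, Matrix.vandermonde_apply, Int.cast_pow, Int.cast_natCast] at h3
      have e1 : ((Fin.ofNat (D+1) (β i) : Fin (D+1)) : ℕ) = β i := by
        simp [Fin.ofNat, Nat.mod_eq_of_lt (Nat.lt_succ_of_le (hβ i))]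
      have e2 : ((Fin.ofNat (D+1) (γ i) : Fin (D+1)) : ℕ) = γ i := by
        simp [Fin.ofNat, Nat.mod_eq_of_lt (Nat.lt_succ_of_le (hΓ γ hγ i))]
      rw [e1] at h3
      rw [h3, Matrix.smul_apply, Matrix.one_apply]
      by_cases hb : β i = γ i
      · simp [hb, V]
      · have : Fin.ofNat (D+1) (γ i) ≠ Fin.ofNat (D+1) (β i) := by
          intro h; apply hb; rw [← e1, ← e2, h]
        rw [if_neg this, if_neg hb]; simp
    calc _ = ∑ v : Fin k → Fin (D+1), ∏ i, (((V.adjugate (Fin.ofNat (D+1) (γ i)) (v i) : ℤ) : ZMod q) * (((v i : ℕ) : ZMod q)) ^ β i) := by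
          simp only [w, Finset.prod_mul_distrib]
      _ = ∏ i, ∑ j : Fin (D+1), ((V.adjugate (Fin.ofNat (D+1) (γ i)) j : ℤ) : ZMod q) * ((j : ℕ) : ZMod q) ^ β i := by
          rw [Finset.prod_univ_sum, Fintype.piFinset_univ]
      _ = ∏ i, if β i = γ i then ((V.det : ℤ) : ZMod q) else 0 := Finset.prod_congr rfl fun i _ => h1 i
      _ = _ := by
          split_ifs with h
          · subst h; simp
          · obtain ⟨i, hi⟩ := Function.ne_iff.1 h
            exact Finset.prod_eq_zero (Finset.mem_univ i) (by simp [hi])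
  have hsum : ∑ v, w v * (∑ β ∈ Γ, c β * ∏ i, (((v i : ℕ) : ZMod q)) ^ β i) = ((V.det : ℤ) : ZMod q) ^ k * c γ := by
    simp only [Finset.mul_sum]
    rw [Finset.sum_comm]
    calc _ = ∑ β ∈ Γ, c β * ∑ v, w v * ∏ i, (((v i : ℕ) : ZMod q)) ^ β i := by
          refine Finset.sum_congr rfl fun β _ => ?_
          rw [Finset.mul_sum]; exact Finset.sum_congr rfl fun v _ => by ring
      _ = ∑ β ∈ Γ, c β * (if β = γ then ((V.det : ℤ) : ZMod q) ^ k else 0) :=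
          Finset.sum_congr rfl fun β hβ => by rw [orth β (hΓ β hβ)]
      _ = _ := by simp [hγ, mul_comm]
  have hzero : ∑ v, w v * (∑ β ∈ Γ, c β * ∏ i, (((v i : ℕ) : ZMod q)) ^ β i) = 0 := by
    have h1 : ∑ v, w v = 0 := by
      have := orth 0 (by simp)
      simpa [hγ0.symm] using this
    calc _ = ∑ v, w v * (∑ β ∈ Γ, c β * ∏ i, (0 : Fin k → ZMod q) i ^ β i) :=
          Finset.sum_congr rfl fun v _ => by rw [hc (fun i => ((v i : ℕ) : ZMod q)) 0]
      _ = 0 := by rw [← Finset.sum_mul, h1, zero_mul]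
  rw [hsum] at hzero
  rcases Int.natAbs_eq V.det with h | h
  · rw [h, Int.cast_natCast] at hzero; exact hzero
  · rw [h, Int.cast_neg, Int.cast_natCast, neg_pow, mul_assoc] at hzero
    have hu : IsUnit ((-1 : ZMod q) ^ k) := (isUnit_one.neg).pow k
    exact (hu.mul_right_eq_zero).1 hzero

theorem le_totient_mul (q : ℕ) (hq : 0 < q) : q ≤ q.divisors.card * q.totient := by
  conv_lhs => rw [← Nat.sum_totient q]
  rw [← smul_eq_mul]
  refine Finset.sum_le_card_nsmul _ _ _ fun d hd => ?_
  exact Nat.le_of_dvd (Nat.totient_pos.2 hq) (Nat.totient_dvd_of_dvd (Nat.dvd_of_mem_divisors hd))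

theorem fiber_card (q : ℕ) [NeZero q] (d : ℕ) (hd : d ∣ q) (y : ZMod q) :
    (Finset.univ.filter fun z : ZMod q => (d : ZMod q) * z = y).card = if d ∣ y.val then d else 0 := by
  have hq : 0 < q := Nat.pos_of_ne_zero (NeZero.ne q)
  have hd0 : 0 < d := Nat.pos_of_dvd_of_pos hd hq
  have hiff : ∀ z : ZMod q, (d : ZMod q) * z = y ↔ d * z.val ≡ y.val [MOD q] := by
    intro z
    rw [← ZMod.natCast_eq_natCast_iff]; simp
  split_ifs with h
  · obtain ⟨w, hw⟩ := h
    obtain ⟨e, he⟩ := hd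
    have he0 : 0 < e := Nat.pos_of_ne_zero (by rintro rfl; omega)
    have h2 := Nat.count_modEq_card q he0 w
    have : q % e = 0 := by rw [he]; simp
    rw [this] at h2
    simp only [Nat.not_lt_zero, if_false, add_zero] at h2
    rw [show q / e = d by rw [he]; exact Nat.mul_div_cancel _ he0] at h2
    rw [Nat.count_eq_card_filter_range] at h2
    refine Eq.trans ?_ h2
    have hiff2 : ∀ n, d * n ≡ y.val [MOD q] ↔ n ≡ w [MOD e] := by
      intro n
      rw [hw, he]
      exact ⟨fun h => Nat.ModEq.mul_left_cancel' hd0.ne' h, fun h => Nat.ModEq.mul_left' _ h⟩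
    refine Finset.card_nbij' (fun z => z.val) (fun n => (n : ZMod q)) ?_ ?_ ?_ ?_
    · intro z hz
      simp only [Finset.coe_filter, Finset.mem_univ, true_and, Set.mem_ofPred_eq, Finset.mem_range] at hz ⊢
      exact ⟨ZMod.val_lt z, (hiff2 _).1 ((hiff z).1 hz)⟩
    · intro n hn
      simp only [Finset.coe_filter, Finset.mem_univ, true_and, Set.mem_ofPred_eq, Finset.mem_range] at hn ⊢
      rw [hiff, ZMod.val_cast_of_lt hn.1, hiff2]; exact hn.2
    · intro z _; simp
    · intro n hn
      simp only [Finset.coe_filter, Set.mem_ofPred_eq, Finset.mem_range] at hn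
      exact ZMod.val_cast_of_lt hn.1
  · rw [Finset.card_eq_zero, Finset.filter_eq_empty_iff]
    intro z _ hz
    apply h
    have := (((hiff z).1 hz).of_dvd hd)
    exact (this.dvd_iff dvd_rfl).1 (dvd_mul_right _ _)

open ArithmeticFunction in
theorem unit_ind (q : ℕ) [NeZero q] (y : ZMod q) :
    (if IsUnit y then (1:ℂ) else 0) = ∑ d ∈ q.divisors, ((moebius d : ℤ) : ℂ) / d *
      ∑ z : ZMod q, (if (d : ZMod q) * z = y then 1 else 0) := by
  have hq : 0 < q := Nat.pos_of_ne_zero (NeZero.ne q)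
  have h1 : ∀ d ∈ q.divisors, ((moebius d : ℤ) : ℂ) / d *
      ∑ z : ZMod q, (if (d : ZMod q) * z = y then 1 else 0) =
      if d ∣ y.val then ((moebius d : ℤ) : ℂ) else 0 := by
    intro d hd
    have hd0 : (d : ℂ) ≠ 0 := by exact_mod_cast (Nat.pos_of_mem_divisors hd).ne'
    rw [Finset.sum_boole, fiber_card q d (Nat.dvd_of_mem_divisors hd)]
    split_ifs
    · field_simp
    · simp
  rw [Finset.sum_congr rfl h1, ← Finset.sum_filter]
  have h2 : q.divisors.filter (fun d => d ∣ y.val) = (Nat.gcd y.val q).divisors := by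
    ext d
    simp only [Finset.mem_filter, Nat.mem_divisors, Nat.dvd_gcd_iff]
    constructor
    · rintro ⟨⟨a, b⟩, c⟩; exact ⟨⟨c, a⟩, (Nat.gcd_pos_of_pos_right _ hq).ne'⟩
    · rintro ⟨⟨a, b⟩, c⟩; exact ⟨⟨b, hq.ne'⟩, a⟩
  rw [h2]
  have h3 : ∑ d ∈ (Nat.gcd y.val q).divisors, moebius d = if Nat.gcd y.val q = 1 then 1 else 0 := by
    rw [← coe_mul_zeta_apply, moebius_mul_coe_zeta, one_apply]
  have h4 : IsUnit y ↔ Nat.gcd y.val q = 1 := by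
    conv_lhs => rw [← ZMod.natCast_zmod_val y]
    exact ZMod.isUnit_iff_coprime _ _
  have h5 := congrArg (fun z : ℤ => (z : ℂ)) h3
  simp only [Int.cast_sum] at h5
  rw [h5]
  simp [h4]

theorem eC_eq {k : ℕ} (Γ : Finset (Fin k → ℕ)) (q : ℕ) [NeZero q] (a : (Fin k → ℕ) → ℕ)
    (v : Fin k → ℕ) :
    eC (∑ γ ∈ Γ, ((a γ : ℝ) / (q : ℝ)) * ∏ i, (v i : ℝ) ^ (γ i)) =
      ZMod.stdAddChar (∑ γ ∈ Γ, (a γ : ZMod q) * ∏ i, (v i : ZMod q) ^ (γ i)) := by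
  have h := ZMod.stdAddChar_coe (N := q) ((∑ γ ∈ Γ, a γ * ∏ i, (v i) ^ (γ i) : ℕ) : ℤ)
  push_cast at h
  rw [h, eC]
  congr 1
  push_cast
  rw [mul_div_assoc, Finset.sum_div]
  congr 1
  refine Finset.sum_congr rfl fun γ _ => ?_
  ring

theorem sum_to_zmod {k : ℕ} (k' q : ℕ) [NeZero q] (F : (Fin k → ZMod q) → ℂ) :
    ∑ v ∈ Fintype.piFinset (fun i : Fin k =>
        if (i : ℕ) < k' then Finset.Icc 1 q
        else (Finset.Icc 1 q).filter fun m => Nat.Coprime m q), F (fun i => (v i : ZMod q)) =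
    ∑ y : Fin k → ZMod q, (∏ i : Fin k, if (i : ℕ) < k' then (1:ℂ) else if IsUnit (y i) then 1 else 0) * F y := by
  classical
  have hq : 0 < q := Nat.pos_of_ne_zero (NeZero.ne q)
  have h1 : ∀ y : Fin k → ZMod q,
      (∏ i : Fin k, if (i : ℕ) < k' then (1:ℂ) else if IsUnit (y i) then 1 else 0) * F y =
      if (∀ i : Fin k, (i : ℕ) < k' ∨ IsUnit (y i)) then F y else 0 := by
    intro y
    split_ifs with h
    · rw [Finset.prod_eq_one, one_mul]
      intro i _
      rcases h i with h | h <;> simp [h]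
    · push Not at h
      obtain ⟨i, hi, hi'⟩ := h
      rw [Finset.prod_eq_zero (Finset.mem_univ i), zero_mul]
      simp [hi', not_lt.2 hi]
  rw [Finset.sum_congr rfl fun y _ => h1 y, ← Finset.sum_filter]
  have hmem : ∀ v : Fin k → ℕ, v ∈ Fintype.piFinset (fun i : Fin k =>
        if (i : ℕ) < k' then Finset.Icc 1 q
        else (Finset.Icc 1 q).filter fun m => Nat.Coprime m q) ↔
        ∀ i, (1 ≤ v i ∧ v i ≤ q) ∧ ((i : ℕ) < k' ∨ IsUnit (v i : ZMod q)) := by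
    intro v
    rw [Fintype.mem_piFinset]
    refine forall_congr' fun i => ?_
    rw [ZMod.isUnit_iff_coprime]
    split_ifs with h <;> simp [h]
  refine Finset.sum_nbij (fun v i => (v i : ZMod q)) ?_ ?_ ?_ (fun _ _ => rfl)
  · intro v hv
    rw [hmem] at hv
    simp only [Finset.mem_filter, Finset.mem_univ, true_and]
    exact fun i => (hv i).2
  · intro v hv w hw hvw
    rw [Finset.mem_coe, hmem] at hv hw
    ext i
    have h := congrFun hvw i
    simp only [ZMod.natCast_eq_natCast_iff] at h
    have h1 := hv i
    have h2 := hw i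
    rcases Nat.lt_or_ge (v i) q with h3 | h3 <;> rcases Nat.lt_or_ge (w i) q with h4 | h4
    · exact Nat.ModEq.eq_of_lt_of_lt h h3 h4
    · have e : w i = q := by omega
      rw [e, Nat.ModEq, Nat.mod_self, Nat.mod_eq_of_lt h3] at h; omega
    · have e : v i = q := by omega
      rw [e, Nat.ModEq, Nat.mod_self, Nat.mod_eq_of_lt h4] at h; omega
    · omega
  · intro y hy
    simp only [Finset.coe_filter, Finset.mem_univ, true_and, Set.mem_ofPred_eq] at hy
    have hc : ∀ i, (((if y i = 0 then q else (y i).val : ℕ)) : ZMod q) = y i := by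
      intro i
      split_ifs with h
      · simp [h]
      · simp
    refine ⟨fun i => if y i = 0 then q else (y i).val, ?_, funext hc⟩
    rw [Finset.mem_coe, hmem]
    intro i
    rw [hc]
    refine ⟨?_, hy i⟩
    split_ifs with h
    · exact ⟨hq, le_rfl⟩
    · exact ⟨Nat.one_le_iff_ne_zero.2 (by simpa [ZMod.val_eq_zero] using h), (ZMod.val_lt _).le⟩

open ArithmeticFunction in
theorem sum_expand {k : ℕ} (k' q : ℕ) [NeZero q] (F : (Fin k → ZMod q) → ℂ) :
    ∑ y : Fin k → ZMod q, (∏ i : Fin k, if (i : ℕ) < k' then (1:ℂ) else if IsUnit (y i) then 1 else 0) * F y =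
    ∑ d ∈ Fintype.piFinset (fun i : Fin k => if (i : ℕ) < k' then {1} else q.divisors),
      (∏ i, ((moebius (d i) : ℤ) : ℂ) / (d i : ℂ)) * ∑ z : Fin k → ZMod q, F (fun i => (d i : ZMod q) * z i) := by
  classical
  have h1 : ∀ (y : Fin k → ZMod q) (i : Fin k), (if (i : ℕ) < k' then (1:ℂ) else if IsUnit (y i) then 1 else 0) =
      ∑ d ∈ (if (i : ℕ) < k' then {1} else q.divisors), ((moebius d : ℤ) : ℂ) / d *
      ∑ z : ZMod q, (if (d : ZMod q) * z = y i then 1 else 0) := by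
    intro y i
    split_ifs with h h2
    · rw [Finset.sum_singleton]
      simp only [Nat.cast_one, one_mul, moebius_apply_one, Int.cast_one, div_one]
      simp only [Finset.sum_ite_eq', Finset.mem_univ, if_true]
    · rw [← unit_ind, if_pos h2]
    · rw [← unit_ind, if_neg h2]
  simp only [h1, Finset.prod_univ_sum, Finset.sum_mul]
  rw [Finset.sum_comm]
  refine Finset.sum_congr rfl fun d _ => ?_
  simp only [Finset.prod_mul_distrib, mul_assoc]
  rw [← Finset.mul_sum]
  congr 1
  simp only [Finset.prod_univ_sum, Fintype.piFinset_univ, Finset.sum_mul]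
  rw [Finset.sum_comm]
  refine Finset.sum_congr rfl fun z _ => ?_
  rw [Finset.sum_eq_single (fun i => (d i : ZMod q) * z i)]
  · simp
  · intro y _ hy
    obtain ⟨i, hi⟩ := Function.ne_iff.1 hy
    rw [Finset.prod_eq_zero (Finset.mem_univ i), zero_mul]
    simp [Ne.symm hi]
  · simp

theorem order_bound {k : ℕ} (Γ : Finset (Fin k → ℕ)) (h0 : (0 : Fin k → ℕ) ∉ Γ) (D N : ℕ)
    (hD : ∀ γ ∈ Γ, ∀ i, γ i ≤ D) (hN0 : 0 < N)
    (hN : ∀ (k q : ℕ) (Γ : Finset (Fin k → ℕ)),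
      (∀ γ ∈ Γ, ∀ i, γ i ≤ D) → ∀ (c : (Fin k → ℕ) → ZMod q),
      (∀ x y : Fin k → ZMod q, ∑ γ ∈ Γ, c γ * ∏ i, x i ^ γ i = ∑ γ ∈ Γ, c γ * ∏ i, y i ^ γ i) →
      ∀ γ ∈ Γ, γ ≠ 0 → (N : ZMod q) ^ k * c γ = 0)
    (q : ℕ) (a : (Fin k → ℕ) → ℕ) (ha : Nat.gcd (Γ.gcd a) q = 1)
    (d : Fin k → ℕ) (hd : ∀ i, 0 < d i) (Q : ℕ) (hQ : 0 < Q)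
    (hc : ∀ x y : Fin k → ZMod q,
      Q • (∑ γ ∈ Γ, (a γ : ZMod q) * ∏ i, ((d i : ZMod q) * x i) ^ γ i) =
      Q • (∑ γ ∈ Γ, (a γ : ZMod q) * ∏ i, ((d i : ZMod q) * y i) ^ γ i)) :
    q ≤ N ^ k * Q * (∏ i, d i) ^ D := by
  have hM : 0 < N ^ k * Q * (∏ i, d i) ^ D := by
    have : 0 < ∏ i, d i := Finset.prod_pos fun i _ => hd i
    positivity
  refine Nat.le_of_dvd hM ?_
  have hrw : ∀ x : Fin k → ZMod q, Q • (∑ γ ∈ Γ, (a γ : ZMod q) * ∏ i, ((d i : ZMod q) * x i) ^ γ i) =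
      ∑ γ ∈ Γ, ((Q : ZMod q) * a γ * ∏ i, (d i : ZMod q) ^ γ i) * ∏ i, x i ^ γ i := by
    intro x
    rw [nsmul_eq_mul, Finset.mul_sum]
    refine Finset.sum_congr rfl fun γ _ => ?_
    simp only [mul_pow, Finset.prod_mul_distrib]
    ring
  have h1 := hN k q Γ hD (fun γ => (Q : ZMod q) * a γ * ∏ i, (d i : ZMod q) ^ γ i)
    (fun x y => by rw [← hrw, ← hrw]; exact hc x y)
  have h2 : ∀ γ ∈ Γ, q ∣ a γ * (N ^ k * Q * (∏ i, d i) ^ D) := by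
    intro γ hγ
    have h3 := h1 γ hγ (fun h => h0 (h ▸ hγ))
    have h4 : q ∣ N ^ k * (Q * a γ * ∏ i, d i ^ γ i) := by
      rw [← ZMod.natCast_eq_zero_iff]; push_cast; exact h3
    have h5 : ∏ i, d i ^ γ i ∣ (∏ i, d i) ^ D := by
      rw [← Finset.prod_pow]
      exact Finset.prod_dvd_prod_of_dvd _ _ fun i _ => pow_dvd_pow _ (hD γ hγ i)
    refine h4.trans ?_
    have := mul_dvd_mul_left (N ^ k * (Q * a γ)) h5
    convert this using 1 <;> ring
  have h3 : q ∣ Γ.gcd a * (N ^ k * Q * (∏ i, d i) ^ D) := by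
    have := Finset.dvd_gcd h2
    rw [Finset.gcd_mul_right] at this
    simpa using this
  exact (Nat.Coprime.dvd_of_dvd_mul_left (Nat.Coprime.symm ha) h3)

theorem fpoly_f {k : ℕ} (Γ : Finset (Fin k → ℕ)) (D : ℕ) (hD : ∀ γ ∈ Γ, ∑ i, γ i ≤ D) (q : ℕ)
    (a : (Fin k → ℕ) → ℕ) (d : Fin k → ℕ) :
    FPoly D (fun z : Fin k → ZMod q => ∑ γ ∈ Γ, (a γ : ZMod q) * ∏ i, ((d i : ZMod q) * z i) ^ γ i) := by
  refine FPoly.sum _ _ _ fun γ hγ => FPoly.mono (hD γ hγ) (FPoly.constMul _ (FPoly.prod _ _ _ fun i => ?_))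
  refine FPoly.pow (FPoly.constMul _ ?_) _
  intro h x y
  simp [fwdDiff]

theorem gauss_sum_estimate
    (k k' k'' : ℕ) (hk : k' + k'' = k)
    (Γ : Finset (Fin k → ℕ)) (hΓ : Γ.Nonempty) (h0 : (0 : Fin k → ℕ) ∉ Γ) :
    ∃ δ : ℝ, 0 < δ ∧ ∃ C : ℝ, 0 < C ∧
      ∀ q : ℕ, 0 < q → ∀ a : (Fin k → ℕ) → ℕ,
        (∀ γ ∈ Γ, a γ ∈ Finset.Icc 1 q) →
        Nat.gcd (Γ.gcd a) q = 1 →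
        ‖gaussSumQ Γ k' k'' q a‖ ≤ C * (q : ℝ) ^ (-δ) := by
  set D : ℕ := Γ.sup (fun γ => ∑ i, γ i) + 1 with hDdef
  have hD : ∀ γ ∈ Γ, ∑ i, γ i ≤ D := fun γ hγ =>
    (Finset.le_sup (f := fun γ : Fin k → ℕ => ∑ i, γ i) hγ).trans (Nat.le_succ _)
  have hD' : ∀ γ ∈ Γ, ∀ i, γ i ≤ D := fun γ hγ i =>
    (Finset.single_le_sum (f := γ) (fun _ _ => Nat.zero_le _) (Finset.mem_univ i)).trans (hD γ hγ)
  have hD1 : (1:ℝ) ≤ D := by rw [hDdef]; push_cast; linarith [Nat.cast_nonneg (α := ℝ) (Γ.sup (fun γ => ∑ i, γ i))]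
  obtain ⟨N, hN0, hN⟩ := vdm D
  obtain ⟨δ, hδ, hδ1, C, hC, hmain⟩ := main_poly D
  set η : ℝ := δ / D with hη
  have hη0 : 0 < η := by positivity
  have hηδ : η ≤ δ := div_le_self hδ.le hD1
  have hηD : D * η ≤ 1 := by rw [hη, mul_div_cancel₀]; exact hδ1; positivity
  have hη1 : η ≤ 1 := hηδ.trans hδ1
  obtain ⟨K, hK, hτ⟩ := tau_bound (η / (4 * (k + 1))) (by positivity)
  have hN1 : (1:ℝ) ≤ N := by exact_mod_cast hN0
  refine ⟨η / 2, by positivity, K ^ (2 * k) * (C * N ^ k), by positivity, ?_⟩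
  intro q hq a _ ha
  have : NeZero q := ⟨hq.ne'⟩
  have hqR : (1:ℝ) ≤ q := by exact_mod_cast hq
  have hq0 : (0:ℝ) < q := by linarith
  set τ : ℝ := ((q.divisors.card : ℕ) : ℝ) with hτdef
  have hτ1 : 1 ≤ τ := by
    rw [hτdef]; exact_mod_cast Finset.card_pos.2 ⟨1, by simp [hq.ne']⟩
  have hφ0 : (0:ℝ) < q.totient := by exact_mod_cast Nat.totient_pos.2 hq
  -- bound for each tuple of divisors
  have hterm : ∀ d ∈ Fintype.piFinset (fun i : Fin k => if (i : ℕ) < k' then {1} else q.divisors),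
      ‖(∏ i, ((ArithmeticFunction.moebius (d i) : ℤ) : ℂ) / (d i : ℂ)) * ∑ z : Fin k → ZMod q,
        (ZMod.stdAddChar (∑ γ ∈ Γ, (a γ : ZMod q) * ∏ i, ((d i : ZMod q) * z i) ^ (γ i)) : ℂ)‖ ≤
      C * N ^ k * (q:ℝ) ^ k * (q:ℝ) ^ (-η) := by
    intro d hd
    have hdpos : ∀ i, 0 < d i := by
      intro i
      have := (Fintype.mem_piFinset.1 hd) i
      split_ifs at this
      · simp at this; omega
      · exact Nat.pos_of_mem_divisors this
    set P : ℕ := ∏ i, d i with hP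
    have hP0 : 0 < P := Finset.prod_pos fun i _ => hdpos i
    have hP1 : (1:ℝ) ≤ P := by exact_mod_cast hP0
    have hc : ‖∏ i, ((ArithmeticFunction.moebius (d i) : ℤ) : ℂ) / (d i : ℂ)‖ ≤ (P:ℝ)⁻¹ := by
      rw [norm_prod, hP, Nat.cast_prod, ← Finset.prod_inv_distrib]
      refine Finset.prod_le_prod (fun _ _ => norm_nonneg _) fun i _ => ?_
      rw [norm_div, Complex.norm_natCast, Complex.norm_intCast, ← one_div]
      gcongr
      exact_mod_cast ArithmeticFunction.abs_moebius_le_one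
    have hm := hmain (Fin k → ZMod q) q _ (fpoly_f Γ D hD q a d)
    set Q := addOrderOf (fun x : Fin k → ZMod q =>
      (fun z : Fin k → ZMod q => ∑ γ ∈ Γ, (a γ : ZMod q) * ∏ i, ((d i : ZMod q) * z i) ^ γ i) x -
      (fun z : Fin k → ZMod q => ∑ γ ∈ Γ, (a γ : ZMod q) * ∏ i, ((d i : ZMod q) * z i) ^ γ i) 0) with hQ
    have hQ0 : 0 < Q := by
      apply Nat.pos_of_dvd_of_pos _ hq
      rw [hQ, ord_dvd_iff]; intro x y; simp
    have hQ1 : (1:ℝ) ≤ Q := by exact_mod_cast hQ0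
    have hob := order_bound Γ h0 D N hD' hN0 hN q a ha d hdpos Q hQ0
      ((ord_dvd_iff _ Q).1 dvd_rfl)
    have hcard : ((Fintype.card (Fin k → ZMod q) : ℕ) : ℝ) = (q:ℝ)^k := by
      simp [ZMod.card]
    rw [hcard] at hm
    have hobR : (q:ℝ) ≤ (N:ℝ)^k * Q * (P:ℝ)^D := by exact_mod_cast hob
    have hqη : (q:ℝ)^η ≤ (N:ℝ)^k * P * (Q:ℝ)^δ := by
      calc (q:ℝ)^η ≤ ((N:ℝ)^k * Q * (P:ℝ)^D)^η := by gcongr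
        _ = ((N:ℝ)^k)^η * (Q:ℝ)^η * ((P:ℝ)^D)^η := by
            rw [Real.mul_rpow (by positivity) (by positivity), Real.mul_rpow (by positivity) (by positivity)]
        _ ≤ ((N:ℝ)^k)^(1:ℝ) * (Q:ℝ)^δ * (P:ℝ)^(1:ℝ) := by
            have e1 : ((N:ℝ)^k)^η ≤ ((N:ℝ)^k)^(1:ℝ) :=
              Real.rpow_le_rpow_of_exponent_le (one_le_pow₀ hN1) hη1
            have e2 : (Q:ℝ)^η ≤ (Q:ℝ)^δ := Real.rpow_le_rpow_of_exponent_le hQ1 hηδ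
            have e3 : ((P:ℝ)^D)^η ≤ (P:ℝ)^(1:ℝ) := by
              rw [← Real.rpow_natCast, ← Real.rpow_mul (by positivity)]
              exact Real.rpow_le_rpow_of_exponent_le hP1 hηD
            exact mul_le_mul (mul_le_mul e1 e2 (by positivity) (by positivity)) e3 (by positivity) (by positivity)
        _ = _ := by rw [Real.rpow_one, Real.rpow_one]; ring
    have hfin : (P:ℝ)⁻¹ * (Q:ℝ)^(-δ) ≤ N^k * (q:ℝ)^(-η) := by
      rw [Real.rpow_neg (by positivity), Real.rpow_neg (by positivity), ← mul_inv, ← div_eq_mul_inv,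
        inv_eq_one_div, div_le_div_iff₀ (by positivity) (by positivity)]
      calc _ = (q:ℝ)^η := one_mul _
        _ ≤ _ := hqη
        _ = _ := by ring
    rw [norm_mul]
    calc _ ≤ (P:ℝ)⁻¹ * (C * (q:ℝ)^k * (Q:ℝ)^(-δ)) :=
          mul_le_mul hc hm (norm_nonneg _) (by positivity)
      _ = C * (q:ℝ)^k * ((P:ℝ)⁻¹ * (Q:ℝ)^(-δ)) := by ring
      _ ≤ C * (q:ℝ)^k * (N^k * (q:ℝ)^(-η)) := by gcongr
      _ = _ := by ring
  have hcardD : ((Fintype.piFinset (fun i : Fin k => if (i : ℕ) < k' then {1} else q.divisors)).card : ℝ) ≤ τ ^ k := by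
    rw [Fintype.card_piFinset, Nat.cast_prod]
    calc _ ≤ ∏ _i : Fin k, τ := by
          refine Finset.prod_le_prod (fun _ _ => by positivity) fun i _ => ?_
          split_ifs
          · simpa using hτ1
          · exact le_rfl
      _ = _ := by simp
  have hsum : ‖∑ v ∈ Fintype.piFinset (fun i : Fin k =>
        if (i : ℕ) < k' then Finset.Icc 1 q
        else (Finset.Icc 1 q).filter fun m => Nat.Coprime m q),
      eC (∑ γ ∈ Γ, ((a γ : ℝ) / (q : ℝ)) * ∏ i, (v i : ℝ) ^ (γ i))‖ ≤
      τ ^ k * (C * N ^ k * (q:ℝ) ^ k * (q:ℝ) ^ (-η)) := by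
    rw [Finset.sum_congr rfl fun v _ => eC_eq Γ q a v]
    rw [sum_to_zmod k' q (fun y => (ZMod.stdAddChar (∑ γ ∈ Γ, (a γ : ZMod q) * ∏ i, (y i) ^ (γ i)) : ℂ)),
      sum_expand]
    refine (norm_sum_le _ _).trans ?_
    refine (Finset.sum_le_card_nsmul _ _ _ hterm).trans ?_
    rw [nsmul_eq_mul]
    gcongr
  have hφ : (q:ℝ) ≤ τ * q.totient := by
    rw [hτdef]; exact_mod_cast le_totient_mul q hq
  have hqk : (q:ℝ)^k ≤ (q:ℝ)^k' * (q.totient:ℝ)^k'' * τ^k := by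
    calc (q:ℝ)^k = (q:ℝ)^k' * (q:ℝ)^k'' := by rw [← hk, pow_add]
      _ ≤ (q:ℝ)^k' * (τ * q.totient)^k'' := by gcongr
      _ = (q:ℝ)^k' * (q.totient:ℝ)^k'' * τ^k'' := by rw [mul_pow]; ring
      _ ≤ _ := by
        gcongr
        omega
  have hτk : τ ^ (2*k) ≤ K^(2*k) * (q:ℝ)^(η/2) := by
    calc τ ^ (2*k) ≤ (K * (q:ℝ)^(η / (4 * (k + 1))))^(2*k) := by
          gcongr; exact hτ q hq
      _ = K^(2*k) * (q:ℝ)^(η / (4 * (k + 1)) * (2*k : ℕ)) := by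
          rw [mul_pow, ← Real.rpow_natCast ((q:ℝ)^_), ← Real.rpow_mul hq0.le]
      _ ≤ _ := by
          gcongr
          push_cast
          rw [div_mul_eq_mul_div, div_le_div_iff₀ (by positivity) (by positivity)]
          nlinarith
  rw [gaussSumQ, norm_mul, norm_inv, norm_mul, norm_pow, norm_pow, Complex.norm_natCast, Complex.norm_natCast]
  rw [inv_mul_le_iff₀ (by positivity)]
  refine hsum.trans ?_
  calc τ ^ k * (C * N ^ k * (q:ℝ) ^ k * (q:ℝ) ^ (-η))
      = (τ ^ k * (C * N ^ k) * (q:ℝ) ^ (-η)) * (q:ℝ) ^ k := by ring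
    _ ≤ (τ ^ k * (C * N ^ k) * (q:ℝ) ^ (-η)) * ((q:ℝ)^k' * (q.totient:ℝ)^k'' * τ^k) := by gcongr
    _ = ((q:ℝ)^k' * (q.totient:ℝ)^k'') * (τ^(2*k) * (C * N^k) * (q:ℝ)^(-η)) := by ring
    _ ≤ ((q:ℝ)^k' * (q.totient:ℝ)^k'') * ((K^(2*k) * (q:ℝ)^(η/2)) * (C * N^k) * (q:ℝ)^(-η)) := by gcongr
    _ = ((q:ℝ)^k' * (q.totient:ℝ)^k'') * (K^(2*k) * (C * N^k) * ((q:ℝ)^(η/2) * (q:ℝ)^(-η))) := by ring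
    _ = _ := by rw [← Real.rpow_add hq0]; congr 3; ring
end
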